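/- Let k ≥ 2 and j ∈ {1,…,k−1}. With high probability, there exists a pair (K,C) that forms a copy of M_j^- in G_p for every p in the range [p_j^−, p_{M_j}) simultaneously, where p_j^− := (1 − 1/√(log n))·(j+1)·(log n)·(k−j)!/((k−j+1)·n^{k−j}). -/

import Mathlib

open MeasureTheory Filter

attribute [local instance] Classical.propDecidable

namespace RSC

variable {V : Type*}

/-- `A` is an `i`-dimensional simplex of the complex `G`. -/
def IsSimplex (G : Set (Finset V)) (i : ℕ) (A : Finset V) : Prop :=
  A ∈ G ∧ A.card = i + 1

/-- A `k`-dimensional simplicial complex on vertex set `V`. -/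
structure IsKComplex (G : Set (Finset V)) (k : ℕ) : Prop where
  down : ∀ A ∈ G, ∀ B, B ⊆ A → B.Nonempty → B ∈ G
  singletons : ∀ v : V, ({v} : Finset V) ∈ G
  dim : ∀ A ∈ G, A.card ≤ k + 1

/-- `i`-cochains with `F₂`-coefficients. -/
abbrev Cochain (G : Set (Finset V)) (i : ℕ) : Type _ :=
  {A : Finset V // IsSimplex G i A} → ZMod 2

/-- The coboundary map `δ^i : C^i(G) → C^{i+1}(G)`. -/
noncomputable def coboundary (G : Set (Finset V)) (i : ℕ) :
    Cochain G i →ₗ[ZMod 2] Cochain G (i + 1) where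
  toFun f := fun σ => ∑ τ ∈ Finset.powersetCard (i + 1) (σ : Finset V),
      if h : IsSimplex G i τ then f ⟨τ, h⟩ else 0
  map_add' f g := by
    funext σ
    simp only [Pi.add_apply, ← Finset.sum_add_distrib]
    refine Finset.sum_congr rfl fun τ _ => ?_
    by_cases h : IsSimplex G i τ <;> simp [h]
  map_smul' c f := by
    funext σ
    simp only [Pi.smul_apply, RingHom.id_apply, Finset.smul_sum]
    refine Finset.sum_congr rfl fun τ _ => ?_
    by_cases h : IsSimplex G i τ <;> simp [h]

/-- The submodule of `i`-cocycles. -/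
noncomputable def cocycles (G : Set (Finset V)) (i : ℕ) : Submodule (ZMod 2) (Cochain G i) :=
  LinearMap.ker (coboundary G i)

/-- The submodule of `i`-coboundaries (`δ^{-1}` is the zero map). -/
noncomputable def coboundaries (G : Set (Finset V)) : (i : ℕ) → Submodule (ZMod 2) (Cochain G i)
  | 0 => ⊥
  | (i + 1) => LinearMap.range (coboundary G i)

/-- The `i`-th cohomology group `H^i(G;F₂) = ker δ^i / im δ^{i-1}`. -/
noncomputable abbrev cohomology (G : Set (Finset V)) (i : ℕ) :=
  (cocycles G i) ⧸ ((coboundaries G i).comap (cocycles G i).subtype)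

/-- `F₂`-cohomological `j`-connectedness: `H^0 ≅ F₂` and `H^i = 0` for `1 ≤ i ≤ j`. -/
def CohomConnected (G : Set (Finset V)) (j : ℕ) : Prop :=
  Nonempty (cohomology G 0 ≃ₗ[ZMod 2] ZMod 2) ∧
    ∀ i, 1 ≤ i → i ≤ j → Subsingleton (cohomology G i)

/-- The `j`-flower in `K` with centre `C`: the set of petals `C ∪ {w}`, `w ∈ K \ C`. -/
def Flower [DecidableEq V] (K C : Finset V) : Set (Finset V) :=
  {P | ∃ w ∈ K \ C, P = insert w C}

/-- A copy of `M_j^-`: a `k`-simplex `K` together with a `(j-1)`-simplex `C ⊆ K` such that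
each petal of the flower `F(K,C)` is contained in no `k`-simplex other than `K`. -/
def IsMjMinus [DecidableEq V] (G : Set (Finset V)) (k j : ℕ) (K C : Finset V) : Prop :=
  IsSimplex G k K ∧ C ∈ G ∧ C.card = j ∧ C ⊆ K ∧
    ∀ P ∈ Flower K C, ∀ K', IsSimplex G k K' → P ⊆ K' → K' = K

/-- A `j`-cycle: every `(j-1)`-simplex lies in an even number of members of `J`. -/
def IsCycle (G : Set (Finset V)) (j : ℕ) (J : Finset (Finset V)) : Prop :=
  (∀ σ ∈ J, IsSimplex G j σ) ∧
    ∀ τ : Finset V, τ.card = j → Even (J.filter (fun σ => τ ⊆ σ)).card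

/-- A copy of `M_j`. -/
def IsMj [DecidableEq V] (G : Set (Finset V)) (k j : ℕ) (K C : Finset V)
    (J : Finset (Finset V)) : Prop :=
  IsMjMinus G k j K C ∧ IsCycle G j J ∧ ∃! P : Finset V, P ∈ J ∧ P ∈ Flower K C

/-- A `j`-shell: a `(j+2)`-set all of whose `(j+1)`-subsets are `j`-simplices. -/
def IsShell (G : Set (Finset V)) (j : ℕ) (A : Finset V) : Prop :=
  A.card = j + 2 ∧ ∀ τ ⊆ A, τ.card = j + 1 → τ ∈ G

/-- A copy of `M_j^*`. -/
def IsMjStar [DecidableEq V] (G : Set (Finset V)) (k j : ℕ) (K C : Finset V) (w a : V) : Prop :=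
  IsMjMinus G k j K C ∧ w ∈ K \ C ∧ a ∉ K ∧ IsShell G j (insert a (insert w C))

/-- The support of a cochain. -/
def cochainSupport {G : Set (Finset V)} {i : ℕ} (f : Cochain G i) : Set (Finset V) :=
  {A | ∃ h : IsSimplex G i A, f ⟨A, h⟩ = 1}

/-- A cochain arising from a copy of `M_j^-`: its support is the flower `F(K,C)`. -/
def ArisesFrom [DecidableEq V] (G : Set (Finset V)) (k j : ℕ) (f : Cochain G j)
    (K C : Finset V) : Prop :=
  IsMjMinus G k j K C ∧ cochainSupport f = Flower K C

/-- A `j`-cocycle generated by copies of `M_j^-`: it differs by a `j`-coboundary from a sum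
of `j`-cocycles arising from copies of `M_j^-`. -/
def GeneratedByMjMinus [DecidableEq V] (G : Set (Finset V)) (k j : ℕ) (f : Cochain G j) : Prop :=
  ∃ (m : ℕ) (fs : Fin m → Cochain G j),
    (∀ i, ∃ K C, ArisesFrom G k j (fs i) K C) ∧
      f - (∑ i, fs i) ∈ coboundaries G j

/-- Membership in `N_G`: a `j`-cocycle not generated by copies of `M_j^-`. -/
def InNG [DecidableEq V] (G : Set (Finset V)) (k j : ℕ) (f : Cochain G j) : Prop :=
  f ∈ cocycles G j ∧ ¬ GeneratedByMjMinus G k j f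

/-- Traversability: the transitive closure of "lying in a common `k`-simplex" is `S × S`. -/
def Traversable (G : Set (Finset V)) (k : ℕ) (S : Set (Finset V)) : Prop :=
  ∀ σ₁ ∈ S, ∀ σ₂ ∈ S,
    Relation.TransGen
      (fun a b => a ∈ S ∧ b ∈ S ∧ ∃ K, IsSimplex G k K ∧ a ⊆ K ∧ b ⊆ K) σ₁ σ₂

/-- A local obstacle: a `k`-simplex containing at least `k-j+1` many `j`-simplices,
each lying in no other `k`-simplex. -/
def IsLocalObstacle (G : Set (Finset V)) (k j : ℕ) (K : Finset V) : Prop :=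
  IsSimplex G k K ∧
    k - j + 1 ≤ {σ : Finset V | IsSimplex G j σ ∧ σ ⊆ K ∧
      ∀ K', IsSimplex G k K' → σ ⊆ K' → K' = K}.ncard

/-- The random complex `G_p` given birth times `t`: all singletons together with all
non-empty subsets of `(k+1)`-sets with birth time at most `p`. -/
def complexAt (k n : ℕ) (t : Finset (Fin n) → ℝ) (p : ℝ) : Set (Finset (Fin n)) :=
  {A | (∃ v, A = {v}) ∨
    (A.Nonempty ∧ ∃ K : Finset (Fin n), K.card = k + 1 ∧ t K ≤ p ∧ A ⊆ K)}

/-- The distribution of birth times: i.i.d. uniform on `[0,1]`. -/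
noncomputable def birthMeasure (n : ℕ) : Measure (Finset (Fin n) → ℝ) :=
  Measure.pi fun _ => volume.restrict (Set.Icc (0 : ℝ) 1)

/-- `p_{M_j}`: the supremum of the probabilities `p ∈ [0,1]` at which `G_p` contains
a copy of `M_j`. -/
noncomputable def pMj (k j n : ℕ) (t : Finset (Fin n) → ℝ) : ℝ :=
  sSup {p : ℝ | p ∈ Set.Icc (0 : ℝ) 1 ∧
    ∃ K C J, IsMj (complexAt k n t p) k j K C J}

/-- The threshold `p_j`. -/
noncomputable def pjThreshold (k j n : ℕ) : ℝ :=
  ((j + 1 : ℝ) * Real.log n + Real.log (Real.log n)) * (Nat.factorial (k - j)) /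
    (((k - j + 1 : ℕ) : ℝ) * (n : ℝ) ^ (k - j))

/-- `p_j^-`. -/
noncomputable def pjMinus (k j n : ℕ) : ℝ :=
  (1 - 1 / Real.sqrt (Real.log n)) * ((j + 1 : ℝ) * Real.log n) * (Nat.factorial (k - j)) /
    (((k - j + 1 : ℕ) : ℝ) * (n : ℝ) ^ (k - j))

/-- `p_{j-1}^-`. -/
noncomputable def pjPrevMinus (k j n : ℕ) : ℝ :=
  (1 - 1 / Real.sqrt (Real.log n)) * ((j : ℝ) * Real.log n) * (Nat.factorial (k - j + 1)) /
    (((k - j + 2 : ℕ) : ℝ) * (n : ℝ) ^ (k - j + 1))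

/-- `p_j^{(1)}`. -/
noncomputable def pjOne (k j n : ℕ) : ℝ :=
  1 / (10 * ((j : ℝ) + 1) * (Nat.choose (k + 1) (j + 1)) * (n : ℝ) ^ (k - j))

/-- The number of copies of `M_j^-` in `G`. -/
noncomputable def countMjMinus (k j : ℕ) {n : ℕ} (G : Set (Finset (Fin n))) : ℕ :=
  {x : Finset (Fin n) × Finset (Fin n) | IsMjMinus G k j x.1 x.2}.ncard

/-- The number of copies of `M_j^*` in `G`. -/
noncomputable def countMjStar (k j : ℕ) {n : ℕ} (G : Set (Finset (Fin n))) : ℕ :=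
  {x : Finset (Fin n) × Finset (Fin n) × Fin n × Fin n |
    IsMjStar G k j x.1 x.2.1 x.2.2.1 x.2.2.2}.ncard

/-!
A pair `(K, C)` is a copy of `M_j^-` in `G_p` exactly when `K` has been born and none of its about
`(k - j + 1) n ^ (k - j) / (k - j)!` blockers has. Let `p_j^+` be the time by which the expected
number of blockers born is `(j + 1) log n + (3 / 4) log log n`, so that a given pair is unblocked
at that time with probability about `n ^ (-j - 1) (log n) ^ (-3 / 4)`.

* The expected number of pairs that are unblocked at `p_j^+` and have `K` born by `p_j^-` is of
  order `(log n) ^ (1 / 4)`, and two such pairs share too few blockers to be correlated, so by the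
  second moment method whp there is one. It serves for all `p` in `[p_j^-, p_j^+]`.
* The expected number of pairs with `K` born between `p_j^-` and `p_j^+`, unblocked at `p_j^+`, is
  of order `(log n) ^ (-1 / 4)`. A pair with `K` born after `p_j^+` is unblocked at the birth of `K`
  only if `K` comes first among itself and its `N` blockers, all of them born after `p_j^+`; by
  exchangeability this costs a factor `1 / (N + 1)`, and the expected number of such pairs also
  tends to zero.
* Hence whp every copy of `M_j^-` present at a time `q > p_j^+` has `K` born by `p_j^-`. If
  `p_j^+ ≤ p < p_{M_j}`, then a copy of `M_j` at some time `q > p` has been a copy of `M_j^-`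
  throughout `[p_j^-, q]`.

There are finitely many pairs, and being unblocked is decreasing in time, so a single pair serves
for all `p < p_{M_j}`.
-/

section Probability

open scoped ProbabilityTheory

variable {Ω ι α : Type*}

lemma tendsto_measure_one_of_tendsto_measureReal_compl {Ω : ι → Type*}
    [∀ i, MeasurableSpace (Ω i)] {μ : ∀ i, Measure (Ω i)} [∀ i, IsProbabilityMeasure (μ i)]
    {l : Filter ι} {A : ∀ i, Set (Ω i)} (h : Tendsto (fun i => (μ i).real (A i)ᶜ) l (nhds 0)) :
    Tendsto (fun i => μ i (A i)) l (nhds 1) := by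
  have hlower : Tendsto (fun i => 1 - ENNReal.ofReal ((μ i).real (A i)ᶜ)) l (nhds 1) := by
    simpa using ENNReal.Tendsto.sub tendsto_const_nhds (ENNReal.tendsto_ofReal h)
      (.inl ENNReal.one_ne_top)
  refine tendsto_of_tendsto_of_tendsto_of_le_of_le hlower tendsto_const_nhds (fun i => ?_)
    fun i => prob_le_one
  have hcover := measure_univ_le_add_compl (μ := μ i) (A i)
  rw [measure_univ] at hcover
  rw [tsub_le_iff_right, ofReal_measureReal (measure_ne_top _ _)]
  exact hcover

section FiniteUnions

variable [MeasurableSpace Ω] {μ : Measure Ω}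

lemma measureReal_biUnion_finset_le_card_mul {s : Finset ι} {A : ι → Set Ω} {b : ℝ}
    (hb : ∀ i ∈ s, μ.real (A i) ≤ b) : μ.real (⋃ i ∈ s, A i) ≤ s.card * b := by
  rw [← nsmul_eq_mul]
  exact (measureReal_biUnion_finset_le s A).trans (Finset.sum_le_card_nsmul s _ b hb)

variable [IsProbabilityMeasure μ]

lemma memLp_two_indicator_one {A : Set Ω} (hA : MeasurableSet A) :
    MemLp (A.indicator (1 : Ω → ℝ)) 2 μ :=
  memLp_indicator_const 2 hA 1 (.inr (measure_ne_top μ A))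

lemma covariance_indicator_one {A B : Set Ω} (hA : MeasurableSet A) (hB : MeasurableSet B) :
    cov[A.indicator 1, B.indicator 1; μ] = μ.real (A ∩ B) - μ.real A * μ.real B := by
  have hmul : (A.indicator 1 * B.indicator 1 : Ω → ℝ) = (A ∩ B).indicator 1 :=
    (Set.inter_indicator_one).symm
  rw [ProbabilityTheory.covariance_eq_sub (memLp_two_indicator_one hA)
      (memLp_two_indicator_one hB), hmul,
    integral_indicator_one (hA.inter hB), integral_indicator_one hA, integral_indicator_one hB]

variable {F : Finset ι} {A : ι → Set Ω} {ρ : ℝ}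

lemma variance_sum_indicator_one_le (hA : ∀ i ∈ F, MeasurableSet (A i)) (hρ : 1 ≤ ρ)
    (hpair : ∀ i ∈ F, ∀ i' ∈ F, i ≠ i' →
      μ.real (A i ∩ A i') ≤ ρ * (μ.real (A i) * μ.real (A i'))) :
    Var[∑ i ∈ F, (A i).indicator 1; μ] ≤
      ∑ i ∈ F, μ.real (A i) + (ρ - 1) * (∑ i ∈ F, μ.real (A i)) ^ 2 := by
  have hcov : ∀ i ∈ F, ∀ i' ∈ F, cov[(A i).indicator 1, (A i').indicator 1; μ] ≤
      (if i' = i then μ.real (A i) else 0) + (ρ - 1) * (μ.real (A i) * μ.real (A i')) := by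
    intro i hi i' hi'
    rw [covariance_indicator_one (hA i hi) (hA i' hi')]
    have hprod : 0 ≤ μ.real (A i) * μ.real (A i') := by positivity
    split_ifs with h
    · subst h
      rw [Set.inter_self]
      nlinarith
    · linarith [hpair i hi i' hi' (Ne.symm h)]
  calc Var[∑ i ∈ F, (A i).indicator 1; μ]
      = ∑ i ∈ F, ∑ i' ∈ F, cov[(A i).indicator 1, (A i').indicator 1; μ] :=
        ProbabilityTheory.variance_sum' fun i hi => memLp_two_indicator_one (hA i hi)
    _ ≤ ∑ i ∈ F, ∑ i' ∈ F, ((if i' = i then μ.real (A i) else 0) +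
          (ρ - 1) * (μ.real (A i) * μ.real (A i'))) :=
        Finset.sum_le_sum fun i hi => Finset.sum_le_sum (hcov i hi)
    _ = ∑ i ∈ F, μ.real (A i) + (ρ - 1) * (∑ i ∈ F, μ.real (A i)) ^ 2 := by
        simp only [Finset.sum_add_distrib, ← Finset.mul_sum, Finset.sum_ite_eq']
        rw [sq, Finset.sum_mul, Finset.sum_congr rfl fun i hi => if_pos hi]

/-- Chebyshev's inequality for the number of the events `A i` that occur. -/
lemma measureReal_forall_notMem_le (hA : ∀ i ∈ F, MeasurableSet (A i)) (hρ : 1 ≤ ρ)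
    (hpair : ∀ i ∈ F, ∀ i' ∈ F, i ≠ i' →
      μ.real (A i ∩ A i') ≤ ρ * (μ.real (A i) * μ.real (A i')))
    (hpos : 0 < ∑ i ∈ F, μ.real (A i)) :
    μ.real {ω | ∀ i ∈ F, ω ∉ A i} ≤ (∑ i ∈ F, μ.real (A i))⁻¹ + (ρ - 1) := by
  set m := ∑ i ∈ F, μ.real (A i) with hm
  set X : Ω → ℝ := ∑ i ∈ F, (A i).indicator 1 with hX
  have hLp : MemLp X 2 μ := memLp_finsetSum' F fun i hi => memLp_two_indicator_one (hA i hi)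
  have hmean : ∫ ω, X ω ∂μ = m := by
    simp only [hX, Finset.sum_apply]
    rw [integral_finsetSum F fun i hi => (integrable_const 1).indicator (hA i hi), hm]
    exact Finset.sum_congr rfl fun i hi => integral_indicator_one (hA i hi)
  have hsub : {ω | ∀ i ∈ F, ω ∉ A i} ⊆ {ω | m ≤ |X ω - ∫ ω, X ω ∂μ|} := fun ω hω => by
    have hXω : X ω = 0 := by
      rw [hX, Finset.sum_apply]
      exact Finset.sum_eq_zero fun i hi => Set.indicator_of_notMem (hω i hi) _
    simp [hXω, hmean, abs_of_pos hpos]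
  calc μ.real {ω | ∀ i ∈ F, ω ∉ A i}
      ≤ Var[X; μ] / m ^ 2 := ENNReal.toReal_le_of_le_ofReal
        (div_nonneg (ProbabilityTheory.variance_nonneg X μ) (sq_nonneg m))
        ((measure_mono hsub).trans (ProbabilityTheory.meas_ge_le_variance_div_sq hLp hpos))
    _ ≤ (m + (ρ - 1) * m ^ 2) / m ^ 2 := by
        gcongr
        exact variance_sum_indicator_one_le hA hρ hpair
    _ = m⁻¹ + (ρ - 1) := by field_simp

end FiniteUnions

section ProductMeasure

/-- The event that, among the coordinates in `F`, the `i`-th is strictly the smallest, and that it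
exceeds `q`. -/
def firstAfter (F : Finset ι) (q : ℝ) (i : ι) : Set (ι → ℝ) :=
  {t | q < t i ∧ ∀ d ∈ F, d ≠ i → t i < t d}

lemma measurableSet_firstAfter [Countable ι] (F : Finset ι) (q : ℝ) (i : ι) :
    MeasurableSet (firstAfter F q i) := by
  unfold firstAfter
  measurability

lemma preimage_comp_perm_firstAfter {F : Finset ι} {σ : Equiv.Perm ι} (hσ : ∀ d, σ d ∈ F ↔ d ∈ F)
    (q : ℝ) (i : ι) : (fun t : ι → ℝ => t ∘ σ) ⁻¹' firstAfter F q i = firstAfter F q (σ i) := by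
  ext t
  exact and_congr_right fun _ => σ.forall_congr fun d => by simp [hσ]

lemma pairwiseDisjoint_firstAfter (F : Finset ι) (q : ℝ) :
    (F : Set ι).PairwiseDisjoint (firstAfter F q) := fun a ha b hb hab =>
  Set.disjoint_left.2 fun _ hta htb => lt_asymm (hta.2 b hb hab.symm) (htb.2 a ha hab)

variable [Fintype ι] [MeasurableSpace α]

lemma measurePreserving_comp_perm (ν : Measure α) [SigmaFinite ν] (σ : Equiv.Perm ι) :
    MeasurePreserving (fun t : ι → α => t ∘ σ) (Measure.pi fun _ => ν) (Measure.pi fun _ => ν) := by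
  convert! measurePreserving_piCongrLeft (fun _ : ι => ν) σ.symm using 1
  ext t i
  exact congrArg t (by simp) |>.trans
    (MeasurableEquiv.piCongrLeft_apply_apply (β := fun _ => α) σ.symm t (σ i)).symm |>.trans
      (by simp)

lemma measureReal_pi_forall_mem_and_forall_mem (ν : Measure α) [IsProbabilityMeasure ν]
    {S T : Finset ι} (hST : Disjoint S T) (A B : Set α) :
    (Measure.pi fun _ : ι => ν).real {t | (∀ i ∈ S, t i ∈ A) ∧ ∀ i ∈ T, t i ∈ B} =
      ν.real A ^ S.card * ν.real B ^ T.card := by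
  have hbox : {t : ι → α | (∀ i ∈ S, t i ∈ A) ∧ ∀ i ∈ T, t i ∈ B} =
      ((S.disjUnion T hST : Finset ι) : Set ι).pi fun i => if i ∈ S then A else B := by
    have hTS : ∀ i ∈ T, i ∉ S := fun i hT hS => Finset.disjoint_left.1 hST hS hT
    ext t
    simp only [Set.mem_ofPred_eq, Set.mem_pi, Finset.mem_coe, Finset.mem_disjUnion, or_imp,
      forall_and]
    exact and_congr (forall₂_congr fun i hi => by rw [if_pos hi])
      (forall₂_congr fun i hi => by rw [if_neg (hTS i hi)])
  have hS : ∏ i ∈ S, ν (if i ∈ S then A else B) = ν A ^ S.card :=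
    Finset.prod_eq_pow_card fun i hi => by rw [if_pos hi]
  have hT : ∏ i ∈ T, ν (if i ∈ S then A else B) = ν B ^ T.card :=
    Finset.prod_eq_pow_card fun i hi => by rw [if_neg (Finset.disjoint_right.1 hST hi)]
  rw [hbox, measureReal_def, Measure.pi_pi_finset, Finset.prod_disjUnion, hS, hT,
    ENNReal.toReal_mul, ENNReal.toReal_pow, ENNReal.toReal_pow, measureReal_def, measureReal_def]

variable (ν : Measure ℝ) [IsProbabilityMeasure ν]

lemma measureReal_firstAfter_eq {F : Finset ι} {a b : ι} (ha : a ∈ F) (hb : b ∈ F) (q : ℝ) :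
    (Measure.pi fun _ => ν).real (firstAfter F q a) =
      (Measure.pi fun _ => ν).real (firstAfter F q b) := by
  have hswap : ∀ d, Equiv.swap a b d ∈ F ↔ d ∈ F := fun d => by
    rw [Equiv.swap_apply_def]
    split_ifs <;> simp_all
  rw [← (measurePreserving_comp_perm ν (Equiv.swap a b)).measureReal_preimage
      (measurableSet_firstAfter F q a).nullMeasurableSet,
    preimage_comp_perm_firstAfter hswap, Equiv.swap_apply_left]

/-- By exchangeability, each coordinate in `F` is equally likely to come first. -/
lemma card_mul_measureReal_firstAfter_le {F : Finset ι} {i : ι} (hi : i ∈ F) (q : ℝ) :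
    F.card * (Measure.pi fun _ => ν).real (firstAfter F q i) ≤ ν.real (Set.Ioi q) ^ F.card := by
  have hsub : ⋃ a ∈ F, firstAfter F q a ⊆ {t | ∀ d ∈ F, q < t d} := by
    simp only [Set.iUnion_subset_iff]
    intro a _ t ht d hd
    obtain rfl | hda := eq_or_ne d a
    exacts [ht.1, ht.1.trans (ht.2 d hd hda)]
  have hall : (Measure.pi fun _ : ι => ν).real {t | ∀ d ∈ F, q < t d} =
      ν.real (Set.Ioi q) ^ F.card := by
    simpa using measureReal_pi_forall_mem_and_forall_mem ν (Finset.disjoint_empty_right F)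
      (Set.Ioi q) ∅
  calc F.card * (Measure.pi fun _ => ν).real (firstAfter F q i)
      = ∑ a ∈ F, (Measure.pi fun _ => ν).real (firstAfter F q a) := by
        rw [Finset.sum_congr rfl fun a ha => measureReal_firstAfter_eq ν ha hi q, Finset.sum_const,
          nsmul_eq_mul]
    _ = (Measure.pi fun _ => ν).real (⋃ a ∈ F, firstAfter F q a) :=
        (measureReal_biUnion_finset (pairwiseDisjoint_firstAfter F q)
          fun a _ => measurableSet_firstAfter F q a).symm
    _ ≤ ν.real (Set.Ioi q) ^ F.card := (measureReal_mono hsub).trans hall.le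

end ProductMeasure

end Probability

section Blockers

open Finset

/-- A candidate for a copy of `M_j^-`: a `(k+1)`-set `K` with a `j`-element centre `C ⊆ K`. -/
structure IsFlowerPair (k j : ℕ) (K C : Finset V) : Prop where
  card_eq : #K = k + 1
  card_center_eq : #C = j
  center_subset : C ⊆ K

variable [DecidableEq V] {k j : ℕ} {K C K' C' : Finset V}

lemma IsFlowerPair.card_sdiff_eq (h : IsFlowerPair k j K C) (hjk : j ≤ k) :
    #(K \ C) = k - j + 1 := by
  rw [card_sdiff_of_subset h.center_subset, h.card_eq, h.card_center_eq]
  omega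

lemma insert_union_sdiff_and_inter {w : V} {T : Finset V} (hCK : C ⊆ K) (hw : w ∈ K \ C)
    (hT : Disjoint T K) :
    (insert w C ∪ T) \ K = T ∧ (insert w C ∪ T) ∩ (K \ C) = {w} := by
  obtain ⟨hwK, _⟩ := mem_sdiff.1 hw
  have hTK : ∀ x ∈ T, x ∉ K := fun _ hx => disjoint_left.1 hT hx
  constructor <;> ext x <;> grind

variable [Fintype V]

/-- The sets of the same size as `K`, other than `K`, that contain a petal of the flower `F(K, C)`:
`(K, C)` is a copy of `M_j^-` exactly when `K`, but none of these, has been born. -/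
def blockers (K C : Finset V) : Finset (Finset V) :=
  {B | #B = #K ∧ B ≠ K ∧ ∃ w ∈ K \ C, insert w C ⊆ B}

lemma mem_blockers {B : Finset V} :
    B ∈ blockers K C ↔ #B = #K ∧ B ≠ K ∧ ∃ w ∈ K \ C, insert w C ⊆ B := by
  simp only [blockers, mem_filter_univ]

lemma self_notMem_blockers : K ∉ blockers K C := fun h => (mem_blockers.1 h).2.1 rfl

lemma card_filter_card_eq_and_superset_le (m : ℕ) (Q : Finset V) :
    #{A : Finset V | #A = m ∧ Q ⊆ A} ≤ (Fintype.card V - #Q).choose (m - #Q) := by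
  rw [← card_compl, ← card_powersetCard]
  refine card_le_card_of_injOn (· \ Q) (fun A hA => ?_) fun A hA B hB hAB => ?_
  · obtain ⟨hcard, hQA⟩ := (mem_filter_univ A).1 hA
    exact mem_powersetCard.2
      ⟨fun x hx => mem_compl.2 (mem_sdiff.1 hx).2, by rw [card_sdiff_of_subset hQA, hcard]⟩
  · rw [← sdiff_union_of_subset ((mem_filter_univ A).1 hA).2, show A \ Q = B \ Q from hAB,
      sdiff_union_of_subset ((mem_filter_univ B).1 hB).2]

lemma card_blockers_le (K C : Finset V) :
    #(blockers K C) ≤ #(K \ C) * (Fintype.card V - (#C + 1)).choose (#K - (#C + 1)) := by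
  have hsub : blockers K C ⊆
      (K \ C).biUnion fun w => {B : Finset V | #B = #K ∧ insert w C ⊆ B} := fun B hB => by
    obtain ⟨hcard, -, w, hw, hwB⟩ := mem_blockers.1 hB
    exact mem_biUnion.2 ⟨w, hw, (mem_filter_univ B).2 ⟨hcard, hwB⟩⟩
  refine (card_le_card hsub).trans (card_biUnion_le_card_mul _ _ _ fun w hw => ?_)
  rw [← card_insert_of_notMem (mem_sdiff.1 hw).2]
  exact card_filter_card_eq_and_superset_le _ _

lemma le_card_blockers (hCK : C ⊆ K) (hcard : #C + 1 < #K) :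
    #(K \ C) * (Fintype.card V - #K).choose (#K - (#C + 1)) ≤ #(blockers K C) := by
  rw [← card_compl, ← card_powersetCard, ← card_product]
  refine card_le_card_of_injOn (fun x => insert x.1 C ∪ x.2) ?_ ?_
  · rintro ⟨w, T⟩ hx
    obtain ⟨hw, hT⟩ := mem_product.1 hx
    obtain ⟨hTK, hTcard⟩ := mem_powersetCard.1 hT
    obtain ⟨hwK, hwC⟩ := mem_sdiff.1 hw
    have hdisj : Disjoint K T := disjoint_left.2 fun x hxK hxT => mem_compl.1 (hTK hxT) hxK
    refine mem_blockers.2 ⟨?_, fun heq => ?_, w, hw, subset_union_left⟩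
    · rw [card_union_of_disjoint (hdisj.mono_left (insert_subset hwK hCK)),
        card_insert_of_notMem hwC, hTcard]
      omega
    · have hempty : T = ∅ := disjoint_self_iff_empty T |>.1
        (hdisj.mono_left (subset_union_right.trans heq.le))
      rw [hempty, card_empty] at hTcard
      omega
  · rintro ⟨w, T⟩ hx ⟨w', T'⟩ hx' (heq : insert w C ∪ T = insert w' C ∪ T')
    obtain ⟨hw, hT⟩ := mem_product.1 hx
    obtain ⟨hw', hT'⟩ := mem_product.1 hx'
    have hdisj : ∀ {S : Finset V}, S ∈ powersetCard (#K - (#C + 1)) Kᶜ → Disjoint S K :=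
      fun hS => disjoint_left.2 fun x hx => mem_compl.1 ((mem_powersetCard.1 hS).1 hx)
    obtain ⟨hsdiff, hinter⟩ := insert_union_sdiff_and_inter hCK hw (hdisj hT)
    obtain ⟨hsdiff', hinter'⟩ := insert_union_sdiff_and_inter hCK hw' (hdisj hT')
    rw [heq] at hsdiff hinter
    exact Prod.ext (singleton_injective (hinter.symm.trans hinter')) (hsdiff.symm.trans hsdiff')

/-- The number of ways to choose a petal of `F(K, C)` and then `k - j` further vertices among
`n - m` admissible ones. The number of blockers of `(K, C)` lies between the values for `m = k + 1`
(vertices outside `K`) and `m = j + 1` (vertices outside the petal). -/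
def blockerCount (k j n m : ℕ) : ℕ := (k - j + 1) * (n - m).choose (k - j)

lemma IsFlowerPair.card_blockers_le (h : IsFlowerPair k j K C) (hjk : j ≤ k) :
    #(blockers K C) ≤ blockerCount k j (Fintype.card V) (j + 1) := by
  simpa only [h.card_sdiff_eq hjk, h.card_eq, h.card_center_eq, blockerCount,
    Nat.add_sub_add_right] using
    RSC.card_blockers_le K C

lemma IsFlowerPair.blockerCount_le_card (h : IsFlowerPair k j K C) (hjk : j < k) :
    blockerCount k j (Fintype.card V) (k + 1) ≤ #(blockers K C) := by
  have hcard : #C + 1 < #K := by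
    rw [h.card_eq, h.card_center_eq]
    omega
  simpa only [h.card_sdiff_eq hjk.le, h.card_eq, h.card_center_eq, blockerCount,
    Nat.add_sub_add_right] using
    le_card_blockers h.center_subset hcard

lemma card_blockers_inter_le (h : IsFlowerPair k j K C) (h' : IsFlowerPair k j K' C')
    (hjk : j < k) (hne : K ≠ K') (hK : K ∉ blockers K' C') :
    #(blockers K C ∩ blockers K' C') ≤ (k - j + 1) ^ 2 * Fintype.card V ^ (k - j - 1) := by
  have hsub : blockers K C ∩ blockers K' C' ⊆ ((K \ C) ×ˢ (K' \ C')).biUnion fun w =>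
      {B : Finset V | #B = k + 1 ∧ insert w.1 C ∪ insert w.2 C' ⊆ B} := fun B hB => by
    obtain ⟨hB, hB'⟩ := mem_inter.1 hB
    obtain ⟨hcard, -, w, hw, hwB⟩ := mem_blockers.1 hB
    obtain ⟨-, -, w', hw', hwB'⟩ := mem_blockers.1 hB'
    exact mem_biUnion.2 ⟨(w, w'), mem_product.2 ⟨hw, hw'⟩,
      (mem_filter_univ B).2 ⟨hcard.trans h.card_eq, union_subset hwB hwB'⟩⟩
  have hcard : #((K \ C) ×ˢ (K' \ C')) = (k - j + 1) ^ 2 := by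
    rw [card_product, h.card_sdiff_eq hjk.le, h'.card_sdiff_eq hjk.le, sq]
  rw [← hcard]
  refine (card_le_card hsub).trans (card_biUnion_le_card_mul _ _ _ fun ⟨w, w'⟩ hww' => ?_)
  obtain ⟨hw, hw'⟩ := mem_product.1 hww'
  have hpetal : #(insert w C) = j + 1 := by
    rw [card_insert_of_notMem (mem_sdiff.1 hw).2, h.card_center_eq]
  have hpetal' : #(insert w' C') = j + 1 := by
    rw [card_insert_of_notMem (mem_sdiff.1 hw').2, h'.card_center_eq]
  -- Equal petals would make `K` contain a petal of `F(K', C')`.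
  have hunion : j + 1 < #(insert w C ∪ insert w' C') := by
    by_contra! hle
    have heq := eq_of_subset_of_card_le (subset_union_left (s₂ := insert w' C'))
      (hle.trans hpetal.ge)
    exact hK (mem_blockers.2 ⟨h.card_eq.trans h'.card_eq.symm, hne, w', hw',
      (subset_union_right.trans heq.ge).trans
        (insert_subset (mem_sdiff.1 hw).1 h.center_subset)⟩)
  have hVpos : 0 < Fintype.card V := Fintype.card_pos_iff.2 ⟨w⟩
  calc #{B : Finset V | #B = k + 1 ∧ insert w C ∪ insert w' C' ⊆ B}
      ≤ (Fintype.card V - _).choose (k + 1 - #(insert w C ∪ insert w' C')) :=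
        card_filter_card_eq_and_superset_le _ _
    _ ≤ Fintype.card V ^ (k + 1 - #(insert w C ∪ insert w' C')) :=
        (Nat.choose_le_pow _ _).trans (Nat.pow_le_pow_left (Nat.sub_le _ _) _)
    _ ≤ Fintype.card V ^ (k - j - 1) := Nat.pow_le_pow_right hVpos (by omega)

end Blockers

section Deterministic

variable {k j n : ℕ} {t : Finset (Fin n) → ℝ} {p pm pp : ℝ} {K C : Finset (Fin n)}

lemma isSimplex_complexAt_iff (hk : 0 < k) :
    IsSimplex (complexAt k n t p) k K ↔ K.card = k + 1 ∧ t K ≤ p := by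
  constructor
  · rintro ⟨⟨v, rfl⟩ | ⟨-, K', hK', ht, hsub⟩, hK⟩
    · rw [Finset.card_singleton] at hK
      omega
    · obtain rfl := Finset.eq_of_subset_of_card_le hsub (hK'.trans hK.symm).le
      exact ⟨hK, ht⟩
  · rintro ⟨hK, ht⟩
    exact ⟨.inr ⟨Finset.card_pos.1 (hK ▸ k.succ_pos), K, hK, ht, subset_rfl⟩, hK⟩

lemma isMjMinus_complexAt_iff (hk : 0 < k) (hj : 0 < j) :
    IsMjMinus (complexAt k n t p) k j K C ↔
      IsFlowerPair k j K C ∧ t K ≤ p ∧ ∀ B ∈ blockers K C, p < t B := by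
  simp only [IsMjMinus, isSimplex_complexAt_iff hk]
  constructor
  · rintro ⟨⟨hK, ht⟩, -, hC, hCK, hpetals⟩
    refine ⟨⟨hK, hC, hCK⟩, ht, fun B hB => ?_⟩
    obtain ⟨hcard, hne, w, hw, hwB⟩ := mem_blockers.1 hB
    by_contra! hBp
    exact hne (hpetals _ ⟨w, hw, rfl⟩ B ⟨hcard.trans hK, hBp⟩ hwB)
  · rintro ⟨⟨hK, hC, hCK⟩, ht, hblock⟩
    refine ⟨⟨hK, ht⟩, .inr ⟨Finset.card_pos.1 (hC ▸ hj), K, hK, ht, hCK⟩, hC, hCK, ?_⟩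
    rintro _ ⟨w, hw, rfl⟩ B ⟨hB, htB⟩ hwB
    by_contra hne
    exact (hblock B (mem_blockers.2 ⟨hB.trans hK.symm, hne, w, hw, hwB⟩)).not_ge htB

/-- The event that `K` is born by time `pm` and none of the blockers of `(K, C)` is born by `pp`. -/
def earlyFlower (pm pp : ℝ) (K C : Finset (Fin n)) : Set (Finset (Fin n) → ℝ) :=
  {t | t K ≤ pm ∧ ∀ B ∈ blockers K C, pp < t B}

/-- The event that `K` is born after time `pm` and that `(K, C)` is unblocked at some time at
which `K` is present and which is not before `pp`. -/
def lateFlower (pm pp : ℝ) (K C : Finset (Fin n)) : Set (Finset (Fin n) → ℝ) :=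
  {t | pm < t K ∧ ∀ B ∈ blockers K C, max pp (t K) < t B}

lemma exists_forall_of_antitone {ι α : Type*} [Finite ι] [Nonempty ι] [LinearOrder α]
    {P : ι → α → Prop} (hP : ∀ i, Antitone (P i)) {s : Set α} (h : ∀ a ∈ s, ∃ i, P i a) :
    ∃ i, ∀ a ∈ s, P i a := by
  by_contra! hcon
  choose f hfs hf using hcon
  obtain ⟨i₀, hi₀⟩ := Finite.exists_max f
  obtain ⟨i, hi⟩ := h (f i₀) (hfs i₀)
  exact hf i (hP i (hi₀ i) hi)

/-- For `p < pp` the early flower serves. For `p ≥ pp` there is an `M_j` at some time after `p`, and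
unless its simplex was born by `pm` it forms a late flower. -/
lemma exists_flower_of_forall_notMem_lateFlower (hk : 0 < k) (hj : 0 < j) (hpp : 0 ≤ pp)
    (hearly : ∃ K C, IsFlowerPair k j K C ∧ t ∈ earlyFlower pm pp K C)
    (hlate : ∀ K C, IsFlowerPair k j K C → t ∉ lateFlower pm pp K C) (hp : p < pMj k j n t) :
    ∃ K C, IsFlowerPair k j K C ∧ t K ≤ pm ∧ ∀ B ∈ blockers K C, p < t B := by
  obtain hlt | hle := lt_or_ge p pp
  · obtain ⟨K, C, hKC, htK, hblock⟩ := hearly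
    exact ⟨K, C, hKC, htK, fun B hB => hlt.trans (hblock B hB)⟩
  · unfold pMj at hp
    have hne : {q | q ∈ Set.Icc (0 : ℝ) 1 ∧ ∃ K C J, IsMj (complexAt k n t q) k j K C J}.Nonempty :=
      Set.nonempty_iff_ne_empty.2 fun hempty => by
        rw [hempty, Real.sSup_empty] at hp
        linarith
    obtain ⟨q, ⟨-, K, C, J, hJ⟩, hpq⟩ := exists_lt_of_lt_csSup hne hp
    obtain ⟨hKC, htK, hblock⟩ := (isMjMinus_complexAt_iff hk hj).1 hJ.1
    refine ⟨K, C, hKC, ?_, fun B hB => hpq.trans (hblock B hB)⟩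
    by_contra! htK'
    exact hlate K C hKC ⟨htK', fun B hB =>
      max_lt ((hle.trans_lt hpq).trans (hblock B hB)) (htK.trans_lt (hblock B hB))⟩

lemma exists_forall_isMjMinus (hk : 0 < k) (hj : 0 < j) (hpp : 0 ≤ pp)
    (hearly : ∃ K C, IsFlowerPair k j K C ∧ t ∈ earlyFlower pm pp K C)
    (hlate : ∀ K C, IsFlowerPair k j K C → t ∉ lateFlower pm pp K C) :
    ∃ K C, ∀ p, pm ≤ p → p < pMj k j n t → IsMjMinus (complexAt k n t p) k j K C := by
  obtain ⟨⟨K, C⟩, h⟩ := exists_forall_of_antitone (ι := Finset (Fin n) × Finset (Fin n))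
    (P := fun x p => IsFlowerPair k j x.1 x.2 ∧ t x.1 ≤ pm ∧ ∀ B ∈ blockers x.1 x.2, p < t B)
    (fun x p q hpq => And.imp_right <| And.imp_right fun hblock B hB => hpq.trans_lt (hblock B hB))
    (s := Set.Iio (pMj k j n t)) fun p hp => by
      obtain ⟨K, C, hKC⟩ :=
        exists_flower_of_forall_notMem_lateFlower hk hj hpp hearly hlate hp
      exact ⟨(K, C), hKC⟩
  exact ⟨K, C, fun p hpm hp => (isMjMinus_complexAt_iff hk hj).2
    ((h p hp).imp_right <| And.imp_left hpm.trans')⟩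

end Deterministic

section BirthTimes

instance isProbabilityMeasure_volume_restrict_Icc_zero_one :
    IsProbabilityMeasure ((volume : Measure ℝ).restrict (Set.Icc 0 1)) :=
  ⟨by simp⟩

instance isProbabilityMeasure_birthMeasure (n : ℕ) : IsProbabilityMeasure (birthMeasure n) := by
  unfold birthMeasure
  infer_instance

lemma measureReal_restrict_Icc_zero_one_Ioi {q : ℝ} (h0 : 0 ≤ q) (h1 : q ≤ 1) :
    (volume.restrict (Set.Icc (0 : ℝ) 1)).real (Set.Ioi q) = 1 - q := by
  have hinter : Set.Ioi q ∩ Set.Icc 0 1 = Set.Ioc q 1 := by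
    ext x
    exact ⟨fun hx => ⟨hx.1, hx.2.2⟩, fun hx => ⟨hx.1, h0.trans hx.1.le, hx.2⟩⟩
  rw [measureReal_restrict_apply measurableSet_Ioi, hinter, Real.volume_real_Ioc_of_le h1]

lemma measureReal_restrict_Icc_zero_one_Iic {q : ℝ} (h0 : 0 ≤ q) (h1 : q ≤ 1) :
    (volume.restrict (Set.Icc (0 : ℝ) 1)).real (Set.Iic q) = q := by
  rw [← Set.compl_Ioi, probReal_compl_eq_one_sub measurableSet_Ioi,
    measureReal_restrict_Icc_zero_one_Ioi h0 h1, sub_sub_cancel]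

lemma measureReal_restrict_Icc_zero_one_Ioc {p q : ℝ} (h0 : 0 ≤ p) (hpq : p ≤ q) (h1 : q ≤ 1) :
    (volume.restrict (Set.Icc (0 : ℝ) 1)).real (Set.Ioc p q) = q - p := by
  rw [measureReal_restrict_apply measurableSet_Ioc, Set.inter_eq_left.2
    (Set.Ioc_subset_Icc_self.trans (Set.Icc_subset_Icc h0 h1)), Real.volume_real_Ioc_of_le hpq]

variable {k j n : ℕ} {pm pp : ℝ} {K C K' C' : Finset (Fin n)}

section EarlyFlower

lemma measurableSet_earlyFlower : MeasurableSet (earlyFlower pm pp K C) := by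
  unfold earlyFlower
  measurability

lemma measureReal_earlyFlower (hpm : 0 ≤ pm) (hmp : pm ≤ pp) (hpp : pp ≤ 1) :
    (birthMeasure n).real (earlyFlower pm pp K C) = pm * (1 - pp) ^ (blockers K C).card := by
  have hbox := measureReal_pi_forall_mem_and_forall_mem (volume.restrict (Set.Icc (0 : ℝ) 1))
    (Finset.disjoint_singleton_left.2 (self_notMem_blockers (K := K) (C := C)))
    (Set.Iic pm) (Set.Ioi pp)
  simp only [Finset.mem_singleton, forall_eq, Finset.card_singleton, pow_one,
    measureReal_restrict_Icc_zero_one_Iic hpm (hmp.trans hpp),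
    measureReal_restrict_Icc_zero_one_Ioi (hpm.trans hmp) hpp] at hbox
  exact hbox

lemma disjoint_earlyFlower (hmp : pm ≤ pp) (hK : K ∈ blockers K' C') :
    Disjoint (earlyFlower pm pp K C) (earlyFlower pm pp K' C') :=
  Set.disjoint_left.2 fun _ ht ht' => ((ht.1.trans hmp).trans_lt (ht'.2 K hK)).false

lemma measureReal_earlyFlower_inter_eq (hpm : 0 ≤ pm) (hmp : pm ≤ pp) (hpp : pp ≤ 1) (hne : K ≠ K')
    (hK : K ∉ blockers K' C') (hK' : K' ∉ blockers K C) :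
    (birthMeasure n).real (earlyFlower pm pp K C ∩ earlyFlower pm pp K' C') =
      pm ^ 2 * (1 - pp) ^ (blockers K C ∪ blockers K' C').card := by
  have hdisj : Disjoint {K, K'} (blockers K C ∪ blockers K' C') := by
    simp [self_notMem_blockers, hK, hK']
  have hbox := measureReal_pi_forall_mem_and_forall_mem (volume.restrict (Set.Icc (0 : ℝ) 1))
    hdisj (Set.Iic pm) (Set.Ioi pp)
  rw [measureReal_restrict_Icc_zero_one_Iic hpm (hmp.trans hpp),
    measureReal_restrict_Icc_zero_one_Ioi (hpm.trans hmp) hpp, Finset.card_pair hne] at hbox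
  rw [← hbox]
  congr 1
  ext t
  simp only [earlyFlower, Set.mem_inter_iff, Set.mem_ofPred_eq, Finset.mem_union,
    Finset.mem_insert, Finset.mem_singleton, or_imp, forall_and, forall_eq, Set.mem_Iic,
    Set.mem_Ioi]
  tauto

lemma measureReal_earlyFlower_inter_le (hjk : j < k) (hpm : 0 ≤ pm) (hmp : pm ≤ pp) (hpp : pp < 1)
    (h : IsFlowerPair k j K C) (h' : IsFlowerPair k j K' C') (hne : K ≠ K') :
    (birthMeasure n).real (earlyFlower pm pp K C ∩ earlyFlower pm pp K' C') ≤
      ((1 - pp) ^ ((k - j + 1) ^ 2 * n ^ (k - j - 1)))⁻¹ *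
        ((birthMeasure n).real (earlyFlower pm pp K C) *
          (birthMeasure n).real (earlyFlower pm pp K' C')) := by
  have hpos : 0 < 1 - pp := sub_pos.2 hpp
  have hle : 1 - pp ≤ 1 := sub_le_self 1 (hpm.trans hmp)
  by_cases hblock : K ∈ blockers K' C' ∨ K' ∈ blockers K C
  · have hdisj : Disjoint (earlyFlower pm pp K C) (earlyFlower pm pp K' C') :=
      hblock.elim (disjoint_earlyFlower hmp) fun hK' => (disjoint_earlyFlower hmp hK').symm
    rw [hdisj.inter_eq, measureReal_empty]
    positivity
  push Not at hblock
  have hinter := card_blockers_inter_le h h' hjk hne hblock.1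
  rw [Fintype.card_fin] at hinter
  have hcard := Finset.card_union_add_card_inter (blockers K C) (blockers K' C')
  rw [measureReal_earlyFlower_inter_eq hpm hmp hpp.le hne hblock.1 hblock.2,
    measureReal_earlyFlower hpm hmp hpp.le, measureReal_earlyFlower hpm hmp hpp.le,
    mul_mul_mul_comm, ← sq, ← pow_add, mul_left_comm]
  gcongr
  rw [← div_eq_inv_mul, le_div_iff₀ (by positivity), ← pow_add]
  exact pow_le_pow_of_le_one hpos.le hle (by omega)

lemma measureReal_forall_notMem_earlyFlower_le (hjk : j < k) (hn : k + 1 ≤ n) (hpm : 0 < pm)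
    (hmp : pm ≤ pp) (hpp : pp < 1) :
    (birthMeasure n).real {t | ∀ K C, IsFlowerPair k j K C → t ∉ earlyFlower pm pp K C} ≤
      (n.choose (k + 1) * (pm * (1 - pp) ^ blockerCount k j n (j + 1)))⁻¹ +
        (((1 - pp) ^ ((k - j + 1) ^ 2 * n ^ (k - j - 1)))⁻¹ - 1) := by
  have hpos : 0 < 1 - pp := sub_pos.2 hpp
  have hle : 1 - pp ≤ 1 := sub_le_self 1 (hpm.le.trans hmp)
  set F : Finset (Finset (Fin n)) := Finset.powersetCard (k + 1) Finset.univ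
  have hcenter : ∀ K ∈ F, ∃ C, IsFlowerPair k j K C := fun K hK => by
    have hcard := (Finset.mem_powersetCard.1 hK).2
    obtain ⟨C, hCK, hC⟩ := Finset.exists_subset_card_eq (s := K) (n := j) (by omega)
    exact ⟨C, hcard, hC, hCK⟩
  choose! center hcenter using hcenter
  have hmean : n.choose (k + 1) * (pm * (1 - pp) ^ blockerCount k j n (j + 1)) ≤
      ∑ K ∈ F, (birthMeasure n).real (earlyFlower pm pp K (center K)) := by
    have hF : F.card = n.choose (k + 1) := by
      rw [Finset.card_powersetCard, Finset.card_univ, Fintype.card_fin]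
    rw [← hF, ← nsmul_eq_mul]
    refine Finset.card_nsmul_le_sum F _ _ fun K hK => ?_
    rw [measureReal_earlyFlower hpm.le hmp hpp.le]
    have hcard := (hcenter K hK).card_blockers_le hjk.le
    rw [Fintype.card_fin] at hcard
    exact mul_le_mul_of_nonneg_left (pow_le_pow_of_le_one hpos.le hle hcard) hpm.le
  have hchoose : 0 < n.choose (k + 1) := Nat.choose_pos hn
  have hmean_pos : 0 < n.choose (k + 1) * (pm * (1 - pp) ^ blockerCount k j n (j + 1)) := by
    positivity
  calc (birthMeasure n).real {t | ∀ K C, IsFlowerPair k j K C → t ∉ earlyFlower pm pp K C}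
      ≤ (birthMeasure n).real {t | ∀ K ∈ F, t ∉ earlyFlower pm pp K (center K)} :=
        measureReal_mono fun t ht K hK => ht K (center K) (hcenter K hK)
    _ ≤ _ := measureReal_forall_notMem_le (fun K _ => measurableSet_earlyFlower)
        ((one_le_inv₀ (by positivity)).2 (pow_le_one₀ hpos.le hle))
        (fun K hK K' hK' => measureReal_earlyFlower_inter_le hjk hpm.le hmp hpp (hcenter K hK)
          (hcenter K' hK'))
        (hmean_pos.trans_le hmean)
    _ ≤ _ := by gcongr

end EarlyFlower

section LateFlower

lemma lateFlower_subset :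
    lateFlower pm pp K C ⊆ {t | t K ∈ Set.Ioc pm pp ∧ ∀ B ∈ blockers K C, t B ∈ Set.Ioi pp} ∪
      firstAfter (insert K (blockers K C)) pp K := by
  rintro t ⟨htK, hblock⟩
  obtain hle | hlt := le_or_gt (t K) pp
  · exact .inl ⟨⟨htK, hle⟩, fun B hB => (le_max_left _ _).trans_lt (hblock B hB)⟩
  · exact .inr ⟨hlt, fun B hB hne =>
      (le_max_right _ _).trans_lt (hblock B (Finset.mem_of_mem_insert_of_ne hB hne))⟩

lemma measureReal_lateFlower_le (hjk : j < k) (hpm : 0 ≤ pm) (hmp : pm ≤ pp) (hpp : pp ≤ 1)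
    (h : IsFlowerPair k j K C) :
    (birthMeasure n).real (lateFlower pm pp K C) ≤
      (1 - pp) ^ blockerCount k j n (k + 1) *
        ((pp - pm) + 1 / (blockerCount k j n (k + 1) + 1)) := by
  have hcount := h.blockerCount_le_card hjk
  rw [Fintype.card_fin] at hcount
  set N := blockerCount k j n (k + 1)
  have hnonneg : 0 ≤ 1 - pp := sub_nonneg.2 hpp
  have hle : 1 - pp ≤ 1 := sub_le_self 1 (hpm.trans hmp)
  have hbox : (birthMeasure n).real
      {t | t K ∈ Set.Ioc pm pp ∧ ∀ B ∈ blockers K C, t B ∈ Set.Ioi pp} ≤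
        (1 - pp) ^ N * (pp - pm) := by
    have hbox := measureReal_pi_forall_mem_and_forall_mem (volume.restrict (Set.Icc (0 : ℝ) 1))
      (Finset.disjoint_singleton_left.2 (self_notMem_blockers (K := K) (C := C)))
      (Set.Ioc pm pp) (Set.Ioi pp)
    simp only [Finset.mem_singleton, forall_eq, Finset.card_singleton, pow_one,
      measureReal_restrict_Icc_zero_one_Ioc hpm hmp hpp,
      measureReal_restrict_Icc_zero_one_Ioi (hpm.trans hmp) hpp] at hbox
    refine hbox.le.trans ?_
    rw [mul_comm]
    exact mul_le_mul_of_nonneg_right (pow_le_pow_of_le_one hnonneg hle hcount) (sub_nonneg.2 hmp)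
  have hfirst : (birthMeasure n).real (firstAfter (insert K (blockers K C)) pp K) ≤
      (1 - pp) ^ N * (1 / (N + 1)) := by
    have hfirst := card_mul_measureReal_firstAfter_le (volume.restrict (Set.Icc (0 : ℝ) 1))
      (Finset.mem_insert_self K (blockers K C)) pp
    rw [measureReal_restrict_Icc_zero_one_Ioi (hpm.trans hmp) hpp,
      Finset.card_insert_of_notMem self_notMem_blockers, Nat.cast_add_one] at hfirst
    rw [mul_one_div, le_div_iff₀ (by positivity), mul_comm]
    refine le_trans ?_ (hfirst.trans (pow_le_pow_of_le_one hnonneg hle (Nat.le_succ_of_le hcount)))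
    gcongr
    exact le_rfl
  calc (birthMeasure n).real (lateFlower pm pp K C)
      ≤ _ := measureReal_mono lateFlower_subset
    _ ≤ _ := measureReal_union_le _ _
    _ ≤ _ := add_le_add hbox hfirst
    _ = _ := (mul_add _ _ _).symm

lemma measureReal_exists_lateFlower_le (hjk : j < k) (hpm : 0 ≤ pm) (hmp : pm ≤ pp) (hpp : pp ≤ 1) :
    (birthMeasure n).real {t | ∃ K C, IsFlowerPair k j K C ∧ t ∈ lateFlower pm pp K C} ≤
      n.choose (k + 1) * ((k + 1).choose j * ((1 - pp) ^ blockerCount k j n (k + 1) *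
        ((pp - pm) + 1 / (blockerCount k j n (k + 1) + 1)))) := by
  have hsub : {t | ∃ K C, IsFlowerPair k j K C ∧ t ∈ lateFlower pm pp K C} ⊆
      ⋃ K ∈ Finset.powersetCard (k + 1) (Finset.univ : Finset (Fin n)),
        ⋃ C ∈ Finset.powersetCard j K, lateFlower pm pp K C := by
    rintro t ⟨K, C, h, ht⟩
    exact Set.mem_biUnion (Finset.mem_powersetCard_univ.2 h.card_eq) <|
      Set.mem_biUnion (Finset.mem_powersetCard.2 ⟨h.center_subset, h.card_center_eq⟩) ht
  refine (measureReal_mono hsub (measure_ne_top _ _)).trans ?_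
  have hsimplices : (Finset.powersetCard (k + 1) (Finset.univ : Finset (Fin n))).card =
      n.choose (k + 1) := by
    rw [Finset.card_powersetCard, Finset.card_univ, Fintype.card_fin]
  rw [← hsimplices]
  refine measureReal_biUnion_finset_le_card_mul fun K hK => ?_
  have hK : K.card = k + 1 := Finset.mem_powersetCard_univ.1 hK
  rw [← hK, ← Finset.card_powersetCard]
  refine measureReal_biUnion_finset_le_card_mul fun C hC => ?_
  obtain ⟨hCK, hC⟩ := Finset.mem_powersetCard.1 hC
  rw [hK]
  exact measureReal_lateFlower_le hjk hpm hmp hpp ⟨hK, hC, hCK⟩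

end LateFlower

end BirthTimes

section Asymptotics

open Asymptotics

open scoped Nat Topology

lemma tendsto_one_sub_pow_mul_exp {ι : Type*} {l : Filter ι} {N : ι → ℕ} {p a : ι → ℝ}
    (hp : Tendsto p l (𝓝 0)) (hNp : Tendsto (fun i => N i * p i - a i) l (𝓝 0))
    (hNp2 : Tendsto (fun i => N i * p i ^ 2) l (𝓝 0)) :
    Tendsto (fun i => (1 - p i) ^ N i * Real.exp (a i)) l (𝓝 1) := by
  have hsmall : ∀ᶠ i in l, |p i| < 1 := hp.abs.eventually_lt_const (by simp)
  have hlog : Tendsto (fun i => N i * (p i + Real.log (1 - p i))) l (𝓝 0) := by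
    have hbound : Tendsto (fun i => N i * p i ^ 2 / (1 - |p i|)) l (𝓝 0) := by
      have hquot := hNp2.div (hp.abs.const_sub 1) (by simp)
      rwa [zero_div] at hquot
    refine squeeze_zero_norm' (hsmall.mono fun i hi => ?_) hbound
    have htaylor := Real.abs_log_sub_add_sum_range_le hi 1
    simp only [Finset.sum_range_one, zero_add, pow_one, Nat.cast_zero, div_one, one_add_one_eq_two,
      sq_abs] at htaylor
    rw [Real.norm_eq_abs, abs_mul, Nat.abs_cast, mul_div_assoc]
    gcongr
  have hexp : Tendsto (fun i => Real.exp (N i * (p i + Real.log (1 - p i)) - (N i * p i - a i)))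
      l (𝓝 1) := by
    simpa using (hlog.sub hNp).rexp
  refine hexp.congr' (hsmall.mono fun i hi => ?_)
  have hpos : 0 < 1 - p i := sub_pos.2 ((le_abs_self _).trans_lt hi)
  have hpow : (1 - p i) ^ N i = Real.exp (N i * Real.log (1 - p i)) := by
    rw [Real.exp_nat_mul, Real.exp_log hpos]
  simp only [hpow, ← Real.exp_add]
  congr 1
  ring

section Logarithms

lemma tendsto_log_natCast_atTop : Tendsto (fun n : ℕ => Real.log n) atTop atTop :=
  Real.tendsto_log_atTop.comp tendsto_natCast_atTop_atTop

lemma tendsto_log_natCast_pow_mul_inv (m : ℕ) :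
    Tendsto (fun n : ℕ => Real.log n ^ m * (n : ℝ)⁻¹) atTop (𝓝 0) :=
  (Real.isLittleO_pow_log_id_atTop (n := m)).tendsto_div_nhds_zero.comp
    tendsto_natCast_atTop_atTop

/-- The expected number of blockers born by the time `pjPlus k j n`. The coefficient `3 / 4` of
`log log n` could be anything strictly between `1 / 2`, needed for the late flowers to vanish,
and `1`, needed for an early flower to survive. -/
noncomputable def blockerExponent (j n : ℕ) : ℝ :=
  (j + 1) * Real.log n + 3 / 4 * Real.log (Real.log n)

lemma exp_blockerExponent {n : ℕ} (hn : 1 < n) (j : ℕ) :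
    Real.exp (blockerExponent j n) = (n : ℝ) ^ (j + 1) * Real.log n ^ (3 / 4 : ℝ) := by
  have hlog : 0 < Real.log n := Real.log_pos (mod_cast hn)
  rw [blockerExponent, Real.exp_add, Real.rpow_def_of_pos hlog, mul_comm (Real.log (Real.log n)),
    ← Nat.cast_add_one, Real.exp_nat_mul, Real.exp_log (mod_cast hn.pos)]

lemma blockerExponent_isBigO (j : ℕ) : blockerExponent j =O[atTop] fun n : ℕ => Real.log n :=
  ((isBigO_refl _ _).const_mul_left _).add
    ((Real.isLittleO_log_id_atTop.isBigO.comp_tendsto tendsto_log_natCast_atTop).const_mul_left _)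

end Logarithms

section BlockerScale

/-- The reciprocal of the asymptotic number `(k - j + 1) n ^ (k - j) / (k - j)!` of blockers. -/
noncomputable def blockerScale (k j n : ℕ) : ℝ :=
  (k - j)! / ((k - j + 1 : ℕ) * (n : ℝ) ^ (k - j))

variable {k j : ℕ}

lemma blockerScale_pos {n : ℕ} (hn : 0 < n) : 0 < blockerScale k j n := by
  unfold blockerScale
  positivity

lemma blockerScale_isBigO (hjk : j < k) :
    blockerScale k j =O[atTop] fun n : ℕ => (n : ℝ)⁻¹ := by
  refine IsBigO.of_bound ((k - j)! : ℝ) ((eventually_gt_atTop 0).mono fun n hn => ?_)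
  have hn1 : (1 : ℝ) ≤ n := mod_cast hn
  have hpow : (n : ℝ) ≤ n ^ (k - j) := le_self_pow₀ hn1 (by omega)
  have hden : (n : ℝ) ≤ (k - j + 1 : ℕ) * n ^ (k - j) :=
    hpow.trans (le_mul_of_one_le_left (by positivity) (mod_cast Nat.le_add_left 1 _))
  rw [Real.norm_of_nonneg (blockerScale_pos hn).le, Real.norm_of_nonneg (by positivity),
    ← div_eq_mul_inv]
  exact div_le_div_of_nonneg_left (by positivity) (by positivity) hden

lemma pow_mul_one_sub_le_factorial_mul_choose {n m r : ℕ} (hn : m + r ≤ n) (hn0 : 0 < n) :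
    (n : ℝ) ^ r * (1 - (m + r : ℕ) * r * (n : ℝ)⁻¹) ≤ r ! * (n - m).choose r := by
  have hnpos : (0 : ℝ) < n := mod_cast hn0
  have hle : ((m + r : ℕ) : ℝ) * (n : ℝ)⁻¹ ≤ 1 := by
    rw [← div_eq_mul_inv, div_le_one hnpos]
    exact_mod_cast hn
  calc (n : ℝ) ^ r * (1 - (m + r : ℕ) * r * (n : ℝ)⁻¹)
      = n ^ r * (1 + r * -((m + r : ℕ) * (n : ℝ)⁻¹)) := by ring
    _ ≤ n ^ r * (1 + -((m + r : ℕ) * (n : ℝ)⁻¹)) ^ r := by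
        gcongr
        exact one_add_mul_le_pow (by linarith) r
    _ = ((n - (m + r) : ℕ) : ℝ) ^ r := by
        rw [← mul_pow, Nat.cast_sub hn]
        congr 1
        field_simp
        ring
    _ ≤ ((n - m + 1 - r : ℕ) : ℝ) ^ r :=
        pow_le_pow_left₀ (Nat.cast_nonneg _) (mod_cast (by omega)) r
    _ ≤ r ! * (n - m).choose r := by
        rw [← Nat.cast_mul, ← Nat.descFactorial_eq_factorial_mul_choose]
        exact_mod_cast Nat.pow_sub_le_descFactorial (n - m) r

lemma factorial_mul_choose_sub_le_pow (n m r : ℕ) : r ! * (n - m).choose r ≤ n ^ r := by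
  rw [← Nat.descFactorial_eq_factorial_mul_choose]
  exact (Nat.descFactorial_le_pow _ _).trans (Nat.pow_le_pow_left (Nat.sub_le _ _) _)

lemma blockerCount_mul_blockerScale (k j n m : ℕ) :
    blockerCount k j n m * blockerScale k j n =
      (k - j)! * (n - m).choose (k - j) / (n : ℝ) ^ (k - j) := by
  rw [blockerCount, blockerScale, Nat.cast_mul, mul_div_assoc', mul_assoc,
    mul_div_mul_left _ _ (by positivity), mul_comm (((n - m).choose (k - j) : ℕ) : ℝ)]

lemma blockerCount_mul_blockerScale_sub_one_isBigO (k j m : ℕ) :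
    (fun n => blockerCount k j n m * blockerScale k j n - 1) =O[atTop]
      fun n : ℕ => (n : ℝ)⁻¹ := by
  refine IsBigO.of_bound ((m + (k - j) : ℕ) * (k - j : ℕ)) ?_
  filter_upwards [eventually_ge_atTop (m + (k - j)), eventually_gt_atTop 0] with n hn hn0
  have hpow : (0 : ℝ) < (n : ℝ) ^ (k - j) := by positivity
  have hlower : 1 - ((m + (k - j) : ℕ) : ℝ) * (k - j : ℕ) * (n : ℝ)⁻¹ ≤
      blockerCount k j n m * blockerScale k j n := by
    rw [blockerCount_mul_blockerScale, le_div_iff₀ hpow, mul_comm]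
    exact pow_mul_one_sub_le_factorial_mul_choose hn hn0
  have hupper : blockerCount k j n m * blockerScale k j n ≤ 1 := by
    rw [blockerCount_mul_blockerScale, div_le_one hpow]
    exact_mod_cast factorial_mul_choose_sub_le_pow n m (k - j)
  rw [Real.norm_of_nonpos (by linarith), Real.norm_of_nonneg (by positivity)]
  linarith

lemma tendsto_blockerCount_mul_blockerScale (k j m : ℕ) :
    Tendsto (fun n => blockerCount k j n m * blockerScale k j n) atTop (𝓝 1) :=
  tendsto_sub_nhds_zero_iff.1
    ((blockerCount_mul_blockerScale_sub_one_isBigO k j m).trans_tendsto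
      tendsto_inv_atTop_nhds_zero_nat)

lemma exists_tendsto_choose_mul_blockerScale_div_pow (hjk : j ≤ k) :
    ∃ c > 0, Tendsto (fun n : ℕ => n.choose (k + 1) * blockerScale k j n / (n : ℝ) ^ (j + 1)) atTop
      (𝓝 c) := by
  refine ⟨((k + 1)! : ℝ)⁻¹ * ((k - j)! / (k - j + 1 : ℕ)), by positivity, ?_⟩
  have hchoose : Tendsto (fun n : ℕ => n.choose (k + 1) / (n : ℝ) ^ (k + 1)) atTop
      (𝓝 ((k + 1)! : ℝ)⁻¹) := by
    have hequiv := (isEquivalent_choose (k + 1)).div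
      (IsEquivalent.refl (u := fun n : ℕ => (n : ℝ) ^ (k + 1)))
    refine hequiv.symm.tendsto_nhds (tendsto_const_nhds.congr' ?_)
    filter_upwards [eventually_gt_atTop 0] with n hn
    simp only [Pi.div_apply]
    field_simp
  refine (hchoose.mul_const _).congr' ((eventually_gt_atTop 0).mono fun n hn => ?_)
  have hpow : (n : ℝ) ^ (k + 1) = n ^ (j + 1) * n ^ (k - j) := by
    rw [← pow_add]
    congr 1
    omega
  simp only [blockerScale, hpow]
  field_simp

end BlockerScale

section Thresholds

variable {k j : ℕ}

/-- The time `p_j^+` at which an early flower born by `pjMinus k j n` is still unblocked, and at or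
after which no flower born after `pjMinus k j n` is. -/
noncomputable def pjPlus (k j n : ℕ) : ℝ := blockerExponent j n * blockerScale k j n

lemma pjMinus_eq (k j n : ℕ) :
    pjMinus k j n = (1 - 1 / √(Real.log n)) * ((j + 1) * Real.log n) * blockerScale k j n :=
  mul_div_assoc _ _ _

lemma pjPlus_sub_pjMinus (k j n : ℕ) :
    pjPlus k j n - pjMinus k j n =
      ((j + 1) * √(Real.log n) + 3 / 4 * Real.log (Real.log n)) * blockerScale k j n := by
  have hdiv : Real.log n / √(Real.log n) = √(Real.log n) := Real.div_sqrt
  rw [pjPlus, pjMinus_eq, blockerExponent]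
  linear_combination (j + 1) * blockerScale k j n * hdiv

lemma eventually_pjMinus_pos (k j : ℕ) : ∀ᶠ n in atTop, 0 < pjMinus k j n := by
  filter_upwards [tendsto_log_natCast_atTop.eventually_gt_atTop 1, eventually_gt_atTop 0]
    with n hlog hn
  have hsqrt : 1 / √(Real.log n) < 1 :=
    (div_lt_one (Real.sqrt_pos.2 (one_pos.trans hlog))).2 (Real.lt_sqrt_of_sq_lt (by simpa))
  have hscale : 0 < blockerScale k j n := blockerScale_pos hn
  rw [pjMinus_eq]
  exact mul_pos (mul_pos (sub_pos.2 hsqrt) (by positivity)) hscale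

lemma eventually_pjMinus_le_pjPlus (k j : ℕ) : ∀ᶠ n in atTop, pjMinus k j n ≤ pjPlus k j n := by
  filter_upwards [tendsto_log_natCast_atTop.eventually_ge_atTop 1, eventually_gt_atTop 0]
    with n hlog hn
  have hloglog : 0 ≤ Real.log (Real.log n) := Real.log_nonneg hlog
  have hscale : 0 < blockerScale k j n := blockerScale_pos hn
  rw [← sub_nonneg, pjPlus_sub_pjMinus]
  positivity

lemma tendsto_blockerExponent_mul_pjPlus (hjk : j < k) :
    Tendsto (fun n => blockerExponent j n * pjPlus k j n) atTop (𝓝 0) := by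
  have hO := (blockerExponent_isBigO j).mul
    ((blockerExponent_isBigO j).mul (blockerScale_isBigO hjk))
  exact hO.trans_tendsto ((tendsto_log_natCast_pow_mul_inv 2).congr fun n => by ring)

lemma tendsto_pjPlus (hjk : j < k) : Tendsto (pjPlus k j) atTop (𝓝 0) :=
  ((blockerExponent_isBigO j).mul (blockerScale_isBigO hjk)).trans_tendsto
    ((tendsto_log_natCast_pow_mul_inv 1).congr fun n => by ring)

lemma tendsto_blockerCount_mul_pjPlus_sub (k j m : ℕ) :
    Tendsto (fun n => blockerCount k j n m * pjPlus k j n - blockerExponent j n) atTop (𝓝 0) := by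
  have hO := (blockerExponent_isBigO j).mul (blockerCount_mul_blockerScale_sub_one_isBigO k j m)
  refine (hO.trans_tendsto ((tendsto_log_natCast_pow_mul_inv 1).congr fun n => by ring)).congr
    fun n => ?_
  simp only [pjPlus]
  ring

lemma tendsto_one_sub_pjPlus_pow_blockerCount_mul_exp (hjk : j < k) (m : ℕ) :
    Tendsto (fun n => (1 - pjPlus k j n) ^ blockerCount k j n m * Real.exp (blockerExponent j n))
      atTop (𝓝 1) := by
  refine tendsto_one_sub_pow_mul_exp (tendsto_pjPlus hjk)
    (tendsto_blockerCount_mul_pjPlus_sub k j m) ?_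
  have hsum := ((tendsto_blockerCount_mul_pjPlus_sub k j m).mul (tendsto_pjPlus hjk)).add
    (tendsto_blockerExponent_mul_pjPlus hjk)
  rw [mul_zero, add_zero] at hsum
  exact hsum.congr fun n => by ring

lemma tendsto_one_sub_pjPlus_pow_overlap (hjk : j < k) :
    Tendsto (fun n => (1 - pjPlus k j n) ^ ((k - j + 1) ^ 2 * n ^ (k - j - 1))) atTop (𝓝 1) := by
  have hoverlap : Tendsto (fun n : ℕ => ((k - j + 1) ^ 2 * n ^ (k - j - 1) : ℕ) * pjPlus k j n)
      atTop (𝓝 0) := by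
    have hO : Tendsto (fun n : ℕ => ((k - j + 1 : ℕ) * (k - j)! : ℝ) *
        (blockerExponent j n * (n : ℝ)⁻¹)) atTop (𝓝 0) := by
      rw [← mul_zero ((k - j + 1 : ℕ) * (k - j)! : ℝ)]
      exact (((blockerExponent_isBigO j).mul (isBigO_refl _ _)).trans_tendsto
        ((tendsto_log_natCast_pow_mul_inv 1).congr fun n => by rw [pow_one])).const_mul _
    refine hO.congr' ((eventually_gt_atTop 0).mono fun n hn => ?_)
    have hpow : (n : ℝ) ^ (k - j) = n ^ (k - j - 1) * n := by
      rw [← pow_succ, Nat.sub_add_cancel (by omega)]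
    simp only [pjPlus, blockerScale, hpow]
    push_cast
    field_simp
  have hsquare := hoverlap.mul (tendsto_pjPlus hjk)
  rw [mul_zero] at hsquare
  simpa using tendsto_one_sub_pow_mul_exp (a := fun _ => 0) (tendsto_pjPlus hjk)
    (by simpa using hoverlap) (hsquare.congr fun n => by ring)

end Thresholds

end Asymptotics

section Limits

open scoped Topology

variable {k j : ℕ}

lemma tendsto_log_natCast_rpow_atTop {r : ℝ} (hr : 0 < r) :
    Tendsto (fun n : ℕ => Real.log n ^ r) atTop atTop :=
  (tendsto_rpow_atTop hr).comp tendsto_log_natCast_atTop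

lemma tendsto_blockerCount_add_one_mul_blockerScale (hjk : j < k) (m : ℕ) :
    Tendsto (fun n => (blockerCount k j n m + 1) * blockerScale k j n) atTop (𝓝 1) := by
  have hscale : Tendsto (blockerScale k j) atTop (𝓝 0) :=
    (blockerScale_isBigO hjk).trans_tendsto tendsto_inv_atTop_nhds_zero_nat
  simpa only [add_mul, one_mul, add_zero] using
    (tendsto_blockerCount_mul_blockerScale k j m).add hscale

lemma tendsto_sqrt_add_log_add_div_rpow {c : ℕ → ℝ} {a : ℝ} (hc : Tendsto c atTop (𝓝 a))
    (b d : ℝ) :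
    Tendsto (fun n : ℕ => (b * √(Real.log n) + d * Real.log (Real.log n) + c n) /
      Real.log n ^ (3 / 4 : ℝ)) atTop (𝓝 0) := by
  have hsqrt : Tendsto (fun n : ℕ => √(Real.log n) / Real.log n ^ (3 / 4 : ℝ)) atTop (𝓝 0) := by
    refine (tendsto_log_natCast_rpow_atTop (r := 1 / 4) (by norm_num)).inv_tendsto_atTop.congr' ?_
    filter_upwards [tendsto_log_natCast_atTop.eventually_gt_atTop 0] with n hlog
    rw [Pi.inv_apply, Real.sqrt_eq_rpow, ← Real.rpow_sub hlog, ← Real.rpow_neg hlog.le]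
    norm_num
  have hloglog : Tendsto (fun n : ℕ => Real.log (Real.log n) / Real.log n ^ (3 / 4 : ℝ)) atTop
      (𝓝 0) :=
    (isLittleO_log_rpow_atTop (r := 3 / 4) (by norm_num)).tendsto_div_nhds_zero.comp
      tendsto_log_natCast_atTop
  have hconst := hc.div_atTop (tendsto_log_natCast_rpow_atTop (r := 3 / 4) (by norm_num))
  have hsum := ((hsqrt.const_mul b).add (hloglog.const_mul d)).add hconst
  simp only [mul_zero, add_zero] at hsum
  exact hsum.congr fun n => by ring

/-- Each of the three factors on the right has a limit: `n ^ (j + 1)` and `log n ^ (3 / 4)` have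
been traded for `exp (blockerExponent j n)`. -/
lemma choose_mul_mul_one_sub_pjPlus_pow_eq {n : ℕ} (hn : 1 < n) (N : ℕ) (y : ℝ) :
    n.choose (k + 1) * (y * blockerScale k j n * (1 - pjPlus k j n) ^ N) =
      n.choose (k + 1) * blockerScale k j n / (n : ℝ) ^ (j + 1) *
        ((1 - pjPlus k j n) ^ N * Real.exp (blockerExponent j n)) *
          (y / Real.log n ^ (3 / 4 : ℝ)) := by
  have hlog : 0 < Real.log n ^ (3 / 4 : ℝ) := Real.rpow_pos_of_pos (Real.log_pos (mod_cast hn)) _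
  have _ : (n : ℝ) ≠ 0 := mod_cast hn.ne_zero
  rw [exp_blockerExponent hn]
  field_simp

lemma tendsto_choose_mul_pjMinus_mul_pow_atTop (hjk : j < k) (m : ℕ) :
    Tendsto (fun n : ℕ => n.choose (k + 1) *
      (pjMinus k j n * (1 - pjPlus k j n) ^ blockerCount k j n m)) atTop atTop := by
  have hfactor : Tendsto (fun n : ℕ => (1 - 1 / √(Real.log n)) * ((j + 1) * Real.log n) /
      Real.log n ^ (3 / 4 : ℝ)) atTop atTop := by
    have hsqrt : Tendsto (fun n : ℕ => (1 - 1 / √(Real.log n)) * (j + 1)) atTop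
        (𝓝 ((1 - 0) * (j + 1 : ℝ))) :=
      ((tendsto_const_nhds.div_atTop (Real.tendsto_sqrt_atTop.comp
        tendsto_log_natCast_atTop)).const_sub 1).mul_const _
    refine (hsqrt.pos_mul_atTop (by norm_num; positivity)
      (tendsto_log_natCast_rpow_atTop (r := 1 / 4) (by norm_num))).congr' ?_
    filter_upwards [tendsto_log_natCast_atTop.eventually_gt_atTop 0] with n hlog
    have hquarter : Real.log n ^ (1 / 4 : ℝ) = Real.log n / Real.log n ^ (3 / 4 : ℝ) := by
      rw [← Real.rpow_one_sub' hlog.le (by norm_num)]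
      norm_num
    rw [hquarter]
    ring
  obtain ⟨c, hc, hchoose⟩ := exists_tendsto_choose_mul_blockerScale_div_pow hjk.le
  have hprod := hchoose.mul (tendsto_one_sub_pjPlus_pow_blockerCount_mul_exp hjk m)
  refine (hprod.pos_mul_atTop (by simpa using hc) hfactor).congr' ?_
  filter_upwards [eventually_gt_atTop 1] with n hn
  rw [pjMinus_eq, choose_mul_mul_one_sub_pjPlus_pow_eq hn]

lemma tendsto_choose_mul_pow_mul_pjPlus_sub_pjMinus_add (hjk : j < k) (m : ℕ) :
    Tendsto (fun n : ℕ => n.choose (k + 1) * ((1 - pjPlus k j n) ^ blockerCount k j n m *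
      ((pjPlus k j n - pjMinus k j n) + 1 / (blockerCount k j n m + 1)))) atTop (𝓝 0) := by
  obtain ⟨c, -, hchoose⟩ := exists_tendsto_choose_mul_blockerScale_div_pow hjk.le
  have hfactor := tendsto_sqrt_add_log_add_div_rpow
    ((tendsto_blockerCount_add_one_mul_blockerScale hjk m).inv₀ one_ne_zero) (j + 1) (3 / 4)
  have hprod := (hchoose.mul (tendsto_one_sub_pjPlus_pow_blockerCount_mul_exp hjk m)).mul hfactor
  rw [mul_zero] at hprod
  refine hprod.congr' ?_
  filter_upwards [eventually_gt_atTop 1] with n hn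
  have hscale : 0 < blockerScale k j n := blockerScale_pos hn.pos
  rw [← choose_mul_mul_one_sub_pjPlus_pow_eq hn, pjPlus_sub_pjMinus]
  field_simp

lemma tendsto_measureReal_forall_notMem_earlyFlower (hjk : j < k) :
    Tendsto (fun n => (birthMeasure n).real {t | ∀ K C, IsFlowerPair k j K C →
      t ∉ earlyFlower (pjMinus k j n) (pjPlus k j n) K C}) atTop (𝓝 0) := by
  have hoverlap := ((tendsto_one_sub_pjPlus_pow_overlap hjk).inv₀ one_ne_zero).sub_const 1
  have hbound := (tendsto_choose_mul_pjMinus_mul_pow_atTop hjk (j + 1)).inv_tendsto_atTop.add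
    hoverlap
  rw [inv_one, sub_self, add_zero] at hbound
  refine squeeze_zero' (.of_forall fun _ => measureReal_nonneg) ?_ hbound
  filter_upwards [eventually_ge_atTop (k + 1), eventually_pjMinus_pos k j,
    eventually_pjMinus_le_pjPlus k j, (tendsto_pjPlus hjk).eventually_lt_const one_pos]
    with n hn hpos hle hlt
  exact measureReal_forall_notMem_earlyFlower_le hjk hn hpos hle hlt

lemma tendsto_measureReal_exists_lateFlower (hjk : j < k) :
    Tendsto (fun n => (birthMeasure n).real {t | ∃ K C, IsFlowerPair k j K C ∧
      t ∈ lateFlower (pjMinus k j n) (pjPlus k j n) K C}) atTop (𝓝 0) := by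
  have hbound := (tendsto_choose_mul_pow_mul_pjPlus_sub_pjMinus_add hjk (k + 1)).const_mul
    ((k + 1).choose j : ℝ)
  rw [mul_zero] at hbound
  refine squeeze_zero' (.of_forall fun _ => measureReal_nonneg) ?_ hbound
  filter_upwards [eventually_pjMinus_pos k j, eventually_pjMinus_le_pjPlus k j,
    (tendsto_pjPlus hjk).eventually_le_const one_pos] with n hpos hle hle_one
  rw [mul_left_comm]
  exact measureReal_exists_lateFlower_le hjk hpos.le hle hle_one

end Limits

/-- Lemma 4.10: whp one copy of `M_j^-` exists in `G_p` throughout `[p_j^-, p_{M_j})`. -/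
theorem statement15 (k j : ℕ) (hk : 2 ≤ k) (hj : 1 ≤ j) (hjk : j < k) :
    Tendsto (fun n : ℕ => birthMeasure n {t : Finset (Fin n) → ℝ |
      ∃ K C : Finset (Fin n),
        ∀ p : ℝ, pjMinus k j n ≤ p → p < pMj k j n t →
          IsMjMinus (complexAt k n t p) k j K C})
      atTop (nhds 1) := by
  have hbound := (tendsto_measureReal_forall_notMem_earlyFlower hjk).add
    (tendsto_measureReal_exists_lateFlower hjk)
  rw [add_zero] at hbound
  refine tendsto_measure_one_of_tendsto_measureReal_compl
    (squeeze_zero' (.of_forall fun _ => measureReal_nonneg) ?_ hbound)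
  filter_upwards [eventually_pjMinus_pos k j, eventually_pjMinus_le_pjPlus k j] with n hpos hle
  refine le_trans (measureReal_mono fun t ht => ?_) (measureReal_union_le _ _)
  by_contra hgood
  simp only [Set.mem_union, Set.mem_ofPred_eq, not_or, not_forall, not_exists, not_and,
    not_not, exists_prop] at hgood
  exact ht (exists_forall_isMjMinus (hj.trans hjk.le) hj (hpos.le.trans hle) hgood.1 hgood.2)

end RSC
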